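/- arXiv:1902.11056 — 3 statements merged into one kernel-verified Lean document; each statement's English description precedes it below -/
import Mathlib

section
/- Let δ > 0 and let O ⊆ ℝ² be a union of closed grid cells (i.e., O = ⋃_{(j,k) ∈ S} [jδ,(j+1)δ] × [kδ,(k+1)δ] for some S ⊆ ℤ²). If p = (p₁, p₂) is a grid node with p ∉ O, then the open square (p₁ − δ, p₁ + δ) × (p₂ − δ, p₂ + δ) is disjoint from O; in other words, the four closed grid cells having p as a common vertex contain no point of O. -/
/-- The closed grid cell indexed by `(j, k)` in the grid of resolution `δ`:
the set `[jδ, (j+1)δ] × [kδ, (k+1)δ] ⊆ ℝ²`. -/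
def gridCell (δ : ℝ) (j k : ℤ) : Set (EuclideanSpace ℝ (Fin 2)) :=
  {x | x 0 ∈ Set.Icc ((j : ℝ) * δ) ((j + 1 : ℝ) * δ) ∧
       x 1 ∈ Set.Icc ((k : ℝ) * δ) ((k + 1 : ℝ) * δ)}

/-- If `O ⊆ ℝ²` is a union of closed grid cells and `p = (p₁, p₂)` is a grid node with
`p ∉ O`, then the open square `(p₁ − δ, p₁ + δ) × (p₂ − δ, p₂ + δ)` is disjoint from `O`. -/
theorem open_square_around_grid_node_disjoint (δ : ℝ) (hδ : 0 < δ) (S : Set (ℤ × ℤ))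
    (O : Set (EuclideanSpace ℝ (Fin 2)))
    (hO : O = ⋃ jk ∈ S, gridCell δ jk.1 jk.2)
    (p : EuclideanSpace ℝ (Fin 2)) (m n : ℤ)
    (hp0 : p 0 = (m : ℝ) * δ) (hp1 : p 1 = (n : ℝ) * δ)
    (hpO : p ∉ O) :
    Disjoint {x : EuclideanSpace ℝ (Fin 2) |
        x 0 ∈ Set.Ioo (p 0 - δ) (p 0 + δ) ∧ x 1 ∈ Set.Ioo (p 1 - δ) (p 1 + δ)} O := by
  rw [Set.disjoint_left]
  rintro x ⟨hx0, hx1⟩ hxO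
  apply hpO
  rw [hO] at hxO ⊢
  simp only [Set.mem_iUnion] at hxO ⊢
  obtain ⟨jk, hS, hc0, hc1⟩ := hxO
  rw [hp0] at hx0
  rw [hp1] at hx1
  have key : ∀ (y : ℝ) (a j : ℤ), y ∈ Set.Ioo ((a : ℝ) * δ - δ) ((a : ℝ) * δ + δ) →
      y ∈ Set.Icc ((j : ℝ) * δ) ((j + 1 : ℝ) * δ) →
      (a : ℝ) * δ ∈ Set.Icc ((j : ℝ) * δ) ((j + 1 : ℝ) * δ) := by
    rintro y a j ⟨h1, h2⟩ ⟨h3, h4⟩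
    have h5 : (j : ℝ) < a + 1 := lt_of_mul_lt_mul_right (by linarith) hδ.le
    have h6 : (a : ℝ) < j + 1 + 1 := lt_of_mul_lt_mul_right (by linarith) hδ.le
    have h7 : j ≤ a := Int.lt_add_one_iff.mp (by exact_mod_cast h5)
    have h8 : a ≤ j + 1 := Int.lt_add_one_iff.mp (by exact_mod_cast h6)
    have h7' : (j : ℝ) ≤ a := by exact_mod_cast h7
    have h8' : (a : ℝ) ≤ j + 1 := by exact_mod_cast h8
    exact ⟨mul_le_mul_of_nonneg_right h7' hδ.le, mul_le_mul_of_nonneg_right h8' hδ.le⟩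
  refine ⟨jk, hS, ?_, ?_⟩
  · rw [hp0]
    exact key _ _ _ hx0 hc0
  · rw [hp1]
    exact key _ _ _ hx1 hc1
end

section
/- Let δ > 0 and let O ⊆ ℝ² be a union of closed grid cells (O = ⋃_{(j,k) ∈ S} [jδ,(j+1)δ] × [kδ,(k+1)δ] for some S ⊆ ℤ²). If p and q are two neighboring grid nodes (grid nodes at Euclidean distance exactly δ that differ in exactly one coordinate by δ) and neither p nor q belongs to O, then the closed line segment joining p and q is disjoint from O. -/
lemma seg_aux (δ : ℝ) (hδ : 0 < δ) (m n j : ℤ) (h : |(m : ℝ) * δ - n * δ| = δ) (a b : ℝ)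
    (ha : 0 ≤ a) (hb : 0 ≤ b) (hab : a + b = 1)
    (hx : a * (m * δ) + b * (n * δ) ∈ Set.Icc ((j : ℝ) * δ) ((j + 1 : ℝ) * δ)) :
    (m : ℝ) * δ ∈ Set.Icc ((j : ℝ) * δ) ((j + 1 : ℝ) * δ) ∨
    (n : ℝ) * δ ∈ Set.Icc ((j : ℝ) * δ) ((j + 1 : ℝ) * δ) := by
  have e : a * (m * δ) + b * (n * δ) = (a * m + b * n) * δ := by ring
  rw [e] at hx
  simp only [Set.mem_Icc, mul_le_mul_iff_left₀ hδ] at hx ⊢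
  rw [← sub_mul, abs_mul, abs_of_pos hδ] at h
  have h1 : |(m : ℝ) - n| = 1 := by
    apply mul_right_cancel₀ hδ.ne'
    rw [h, one_mul]
  have h2 : |m - n| = 1 := by exact_mod_cast h1
  obtain ⟨hx1, hx2⟩ := hx
  have hb' : b = 1 - a := by linarith
  subst hb'
  norm_cast
  rcases (abs_eq zero_le_one).1 h2 with h3 | h3
  · obtain rfl : m = n + 1 := by omega
    push_cast at hx1 hx2
    have u : j ≤ n + 1 := by
      have : (j : ℝ) ≤ n + 1 := by linarith
      exact_mod_cast this
    have v : n ≤ j + 1 := by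
      have : (n : ℝ) ≤ j + 1 := by linarith
      exact_mod_cast this
    omega
  · obtain rfl : n = m + 1 := by omega
    push_cast at hx1 hx2
    have u : j ≤ m + 1 := by
      have : (j : ℝ) ≤ m + 1 := by linarith
      exact_mod_cast this
    have v : m ≤ j + 1 := by
      have : (m : ℝ) ≤ j + 1 := by linarith
      exact_mod_cast this
    omega

/-- If `O ⊆ ℝ²` is a union of closed grid cells and `p`, `q` are two neighboring grid
nodes (grid nodes at Euclidean distance exactly `δ` that differ in exactly one
coordinate by `δ`), neither of which belongs to `O`, then the closed line segment
joining `p` and `q` is disjoint from `O`. -/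
theorem segment_between_neighbor_nodes_disjoint (δ : ℝ) (hδ : 0 < δ) (S : Set (ℤ × ℤ))
    (O : Set (EuclideanSpace ℝ (Fin 2)))
    (hO : O = ⋃ jk ∈ S, gridCell δ jk.1 jk.2)
    (p q : EuclideanSpace ℝ (Fin 2)) (mp np mq nq : ℤ)
    (hp0 : p 0 = (mp : ℝ) * δ) (hp1 : p 1 = (np : ℝ) * δ)
    (hq0 : q 0 = (mq : ℝ) * δ) (hq1 : q 1 = (nq : ℝ) * δ)
    (hdist : dist p q = δ)
    (hneighbor : (p 0 = q 0 ∧ |p 1 - q 1| = δ) ∨ (p 1 = q 1 ∧ |p 0 - q 0| = δ))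
    (hpO : p ∉ O) (hqO : q ∉ O) :
    Disjoint (segment ℝ p q) O := by
  subst hO
  rw [Set.disjoint_left]
  rintro x ⟨a, b, ha, hb, hab, rfl⟩ hx
  simp only [Set.mem_iUnion, exists_prop, not_exists, not_and] at hpO hqO hx
  obtain ⟨jk, hS, hx⟩ := hx
  have hP := hpO jk hS
  have hQ := hqO jk hS
  simp only [gridCell, Set.mem_setOf_eq, PiLp.add_apply, PiLp.smul_apply, smul_eq_mul]
    at hP hQ hx
  obtain ⟨hx0, hx1⟩ := hx
  rcases hneighbor with ⟨h, h'⟩ | ⟨h, h'⟩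
  · rw [← h, ← add_mul, hab, one_mul] at hx0
    rw [hp1, hq1] at h' hx1
    rcases seg_aux δ hδ _ _ _ h' a b ha hb hab hx1 with k | k
    · exact hP ⟨hx0, hp1 ▸ k⟩
    · exact hQ ⟨h ▸ hx0, hq1 ▸ k⟩
  · rw [← h, ← add_mul, hab, one_mul] at hx1
    rw [hp0, hq0] at h' hx0
    rcases seg_aux δ hδ _ _ _ h' a b ha hb hab hx0 with k | k
    · exact hP ⟨hp0 ▸ k, hx1⟩
    · exact hQ ⟨hq0 ▸ k, h ▸ hx1⟩
end

section
/- Let θ_max ∈ (0, π/2), let c₁ = tan θ_max, and let u, v be nonzero vectors in ℝ². Then |u₁v₂ − u₂v₁| ≤ c₁·(u₁v₁ + u₂v₂) holds if and only if the (unsigned) angle between u and v is at most θ_max. In particular, the inequality forces the inner product u₁v₁ + u₂v₂ to be positive. -/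
/-- Let `θ_max ∈ (0, π/2)`, `c₁ = tan θ_max`, and let `u, v` be nonzero vectors of `ℝ²`.
Then `|u₁v₂ − u₂v₁| ≤ c₁·(u₁v₁ + u₂v₂)` if and only if the (unsigned) angle between
`u` and `v` is at most `θ_max`; moreover the inequality forces the inner product
`u₁v₁ + u₂v₂` to be positive. -/
theorem curvature_constraint_iff_angle_le (θmax : ℝ)
    (hθ : θmax ∈ Set.Ioo 0 (Real.pi / 2)) (c₁ : ℝ) (hc : c₁ = Real.tan θmax)
    (u v : EuclideanSpace ℝ (Fin 2)) (hu : u ≠ 0) (hv : v ≠ 0) :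
    ((|u 0 * v 1 - u 1 * v 0| ≤ c₁ * (u 0 * v 0 + u 1 * v 1)) ↔
      InnerProductGeometry.angle u v ≤ θmax) ∧
    ((|u 0 * v 1 - u 1 * v 0| ≤ c₁ * (u 0 * v 0 + u 1 * v 1)) →
      0 < u 0 * v 0 + u 1 * v 1) := by
  obtain ⟨h0, h1⟩ := hθ
  set α := InnerProductGeometry.angle u v with hα
  have hin : inner ℝ u v = u 0 * v 0 + u 1 * v 1 := by
    simp [PiLp.inner_apply, Fin.sum_univ_two]; ring
  have hN : 0 < ‖u‖ * ‖v‖ := mul_pos (norm_pos_iff.mpr hu) (norm_pos_iff.mpr hv)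
  have hcos : u 0 * v 0 + u 1 * v 1 = Real.cos α * (‖u‖ * ‖v‖) := by
    rw [← hin, hα, InnerProductGeometry.cos_angle_mul_norm_mul_norm]
  have hsin : |u 0 * v 1 - u 1 * v 0| = Real.sin α * (‖u‖ * ‖v‖) := by
    rw [hα, InnerProductGeometry.sin_angle_mul_norm_mul_norm, ← Real.sqrt_sq_eq_abs]
    congr 1
    simp only [PiLp.inner_apply, Fin.sum_univ_two, RCLike.inner_apply, conj_trivial]
    ring
  have ha0 : 0 ≤ α := InnerProductGeometry.angle_nonneg u v
  have hapi : α ≤ Real.pi := InnerProductGeometry.angle_le_pi u v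
  have hcθ : 0 < Real.cos θmax := Real.cos_pos_of_mem_Ioo ⟨by linarith, h1⟩
  have key : (|u 0 * v 1 - u 1 * v 0| ≤ c₁ * (u 0 * v 0 + u 1 * v 1)) ↔ α ≤ θmax := by
    rw [hsin, hcos, hc, ← mul_assoc (Real.tan θmax), mul_le_mul_iff_left₀ hN, Real.tan_eq_sin_div_cos,
      div_mul_eq_mul_div, le_div_iff₀ hcθ]
    have e : Real.sin (α - θmax) = Real.sin α * Real.cos θmax - Real.sin θmax * Real.cos α := by
      rw [Real.sin_sub]; ring
    constructor
    · intro h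
      by_contra hlt
      have := Real.sin_pos_of_pos_of_lt_pi (x := α - θmax) (by linarith) (by linarith)
      linarith
    · intro h
      have := Real.sin_nonpos_of_nonpos_of_neg_pi_le (x := α - θmax) (by linarith)
        (by linarith)
      linarith
  refine ⟨key, fun h => ?_⟩
  have hle := key.mp h
  rw [hcos]
  exact mul_pos (Real.cos_pos_of_mem_Ioo ⟨by linarith, by linarith⟩) hN
end
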